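/- arXiv:2001.03940 — 2 statements merged into one kernel-verified Lean document; each statement's English description precedes it below -/
import Mathlib

section
/- Let E ⊂ ℂ be a connected set containing at least two points, and let H : ℂ × E → ℂ be a holomorphic motion of E over the whole plane ℂ with base point λ₀. Then there exist entire functions f, g : ℂ → ℂ with f(λ₀) = 0, g(λ₀) = 1 and g nowhere vanishing, such that H(λ, z) = f(λ) + g(λ)·z for all λ ∈ ℂ and z ∈ E. -/
open Set

/-!
For three distinct points `a, b, z` of `E`, the cross-ratio-like quotient
`(H(l, z) - H(l, a)) / (H(l, b) - H(l, a))` is an entire function of `l` which, by injectivity of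
`H(l, ·)`, omits the values `0` and `1`.  By Picard's little theorem it is constant, so it keeps
its value `(z - a) / (b - a)` at the base point, and this is the asserted affine formula.

Picard's theorem (`picard_zero_one`) is proved by the method of Landau and König.  If `F` is entire
and omits `0` and `1`, then `F = exp (2πi cosh² g)` for an entire function `g`, and `g` omits all
points `w` with `cosh² w ∈ ℤ`.  Such points occur in every disc of radius `5`
(`exists_cosh_sq_eq_natCast`).  On the other hand the range of an entire function which is not
constant contains arbitrarily large discs, a form of Bloch's theorem
(`exists_ball_subset_range`).
-/

namespace HolomorphicMotion

open Metric Complex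

/-- If `|f'| ≤ 2 |f' a|` on a disc around `a`, then the range of `f` contains a disc whose radius is
proportional to that of the given disc and to `|f' a|`: by the Schwarz lemma `f'` stays close to
`f' a` near `a`, so that `f` grows linearly there. -/
lemma ball_subset_range_of_deriv_le {f : ℂ → ℂ} (hf : Differentiable ℂ f) {a : ℂ} {r : ℝ}
    (hr : 0 < r) (ha : deriv f a ≠ 0)
    (hb : ∀ z ∈ ball a r, ‖deriv f z‖ ≤ 2 * ‖deriv f a‖) :
    ball (f a) (r * ‖deriv f a‖ / 24) ⊆ range f := by
  have hd : Differentiable ℂ (deriv f) := hf.deriv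
  have hpos : 0 < ‖deriv f a‖ := norm_pos_iff.mpr ha
  have hmaps : MapsTo (deriv f) (ball a r) (closedBall (deriv f a) (3 * ‖deriv f a‖)) := by
    intro z hz
    rw [mem_closedBall, dist_eq_norm]
    linarith [norm_sub_le (deriv f z) (deriv f a), hb z hz]
  have hclose : ∀ z ∈ closedBall a (r / 6), ‖deriv f z - deriv f a‖ ≤ ‖deriv f a‖ / 2 := by
    intro z hz
    rw [mem_closedBall] at hz
    have h := dist_le_div_mul_dist_of_mapsTo_ball hd.differentiableOn hmaps
      (mem_ball.mpr (by linarith : dist z a < r))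
    rw [dist_eq_norm] at h
    refine h.trans ?_
    calc 3 * ‖deriv f a‖ / r * dist z a ≤ 3 * ‖deriv f a‖ / r * (r / 6) := by gcongr
      _ = ‖deriv f a‖ / 2 := by field_simp; ring
  have hlin : ∀ z ∈ closedBall a (r / 6),
      ‖(f z - deriv f a * z) - (f a - deriv f a * a)‖ ≤ ‖deriv f a‖ / 2 * ‖z - a‖ := by
    intro z hz
    refine (convex_closedBall a (r / 6)).norm_image_sub_le_of_norm_hasDerivWithin_le
      (f := fun z => f z - deriv f a * z) (f' := fun z => deriv f z - deriv f a)
      (fun x _ => ?_) hclose (mem_closedBall_self (by positivity)) hz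
    have h := (hf x).hasDerivAt.sub ((hasDerivAt_id x).const_mul (deriv f a))
    rw [mul_one] at h
    exact h.hasDerivWithinAt
  have hsphere : ∀ z ∈ sphere a (r / 6), r * ‖deriv f a‖ / 12 ≤ ‖f z - f a‖ := by
    intro z hz
    have h1 := hlin z (sphere_subset_closedBall hz)
    have hz' : ‖z - a‖ = r / 6 := by rw [← dist_eq_norm]; exact hz
    have h2 : deriv f a * (z - a) =
        (f z - f a) - ((f z - deriv f a * z) - (f a - deriv f a * a)) := by ring
    have h3 := norm_sub_le (f z - f a) ((f z - deriv f a * z) - (f a - deriv f a * a))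
    rw [← h2, norm_mul, hz'] at h3
    rw [hz'] at h1
    linarith
  have hne : ∃ᶠ z in nhds a, f z ≠ f a :=
    ((hf a).hasDerivAt.eventually_ne ha).frequently.filter_mono nhdsWithin_le_nhds
  have h := hf.diffContOnCl.ball_subset_image_closedBall (by positivity : 0 < r / 6) hsphere hne
  rw [show r * ‖deriv f a‖ / 12 / 2 = r * ‖deriv f a‖ / 24 by ring] at h
  exact h.trans (image_subset_range _ _)

/-- Bloch's theorem for entire functions: the range of a nonconstant entire function contains
arbitrarily large discs. -/
lemma exists_ball_subset_range {f : ℂ → ℂ} (hf : Differentiable ℂ f) {p : ℂ}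
    (hp : deriv f p ≠ 0) (C : ℝ) : ∃ c, ball c C ⊆ range f := by
  have hpos : 0 < ‖deriv f p‖ := norm_pos_iff.mpr hp
  obtain ⟨R, hR, hRC⟩ : ∃ R : ℝ, 0 < R ∧ 48 * C ≤ R * ‖deriv f p‖ := by
    refine ⟨48 * |C| / ‖deriv f p‖ + 1, by positivity, ?_⟩
    have : (48 * |C| / ‖deriv f p‖ + 1) * ‖deriv f p‖ = 48 * |C| + ‖deriv f p‖ := by
      field_simp
    rw [this]
    linarith [le_abs_self C]
  -- The point `a` maximising `(R - |z - p|) |f' z|` has `|f'| ≤ 2 |f' a|` on the disc reaching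
  -- halfway to the boundary.
  obtain ⟨a, haR, hmax⟩ := (isCompact_closedBall p R).exists_isMaxOn
    (nonempty_closedBall.mpr hR.le) (f := fun z => (R - dist z p) * ‖deriv f z‖)
    (by have := hf.deriv.continuous; fun_prop)
  have hmax' : ∀ z ∈ closedBall p R,
      (R - dist z p) * ‖deriv f z‖ ≤ (R - dist a p) * ‖deriv f a‖ := fun z hz => hmax hz
  have h0 : R * ‖deriv f p‖ ≤ (R - dist a p) * ‖deriv f a‖ := by
    simpa using hmax' p (mem_closedBall_self hR.le)
  have hprod : 0 < (R - dist a p) * ‖deriv f a‖ := lt_of_lt_of_le (by positivity) h0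
  have hnn : 0 ≤ R - dist a p := sub_nonneg.mpr haR
  have hrpos : 0 < R - dist a p := by
    rcases hnn.eq_or_lt with h | h
    · rw [← h, zero_mul] at hprod
      exact absurd hprod (lt_irrefl _)
    · exact h
  have ha : deriv f a ≠ 0 := by
    intro h
    simp [h] at hprod
  refine ⟨f a, Subset.trans (ball_subset_ball ?_)
    (ball_subset_range_of_deriv_le hf (half_pos hrpos) ha ?_)⟩
  · linarith
  · intro z hz
    rw [mem_ball] at hz
    have htri := dist_triangle z a p
    have h1 := hmax' z (mem_closedBall.mpr (by linarith))
    have h2 : (R - dist a p) / 2 * ‖deriv f z‖ ≤ (R - dist z p) * ‖deriv f z‖ := by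
      gcongr
      linarith
    have h3 : (R - dist a p) * ‖deriv f z‖ ≤ (R - dist a p) * (2 * ‖deriv f a‖) := by linarith
    exact le_of_mul_le_mul_left h3 hrpos

lemma exists_entire_log {f : ℂ → ℂ} (hf : Differentiable ℂ f) (h0 : ∀ z, f z ≠ 0) :
    ∃ g : ℂ → ℂ, Differentiable ℂ g ∧ ∀ z, f z = exp (g z) := by
  have hq : Differentiable ℂ (fun z => deriv f z / f z) := hf.deriv.div hf h0
  obtain ⟨g, hg0, hg⟩ := hq.isExactOn_univ.with_val_at 0 (log (f 0))
  have hg' : ∀ z, HasDerivAt g (deriv f z / f z) z := fun z => hg z (mem_univ z)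
  refine ⟨g, fun z => (hg' z).differentiableAt, fun z => ?_⟩
  have hder : ∀ w, HasDerivAt (fun z => f z * exp (-g z)) 0 w := by
    intro w
    have e : deriv f w * exp (-g w) + f w * (exp (-g w) * -(deriv f w / f w)) = 0 := by
      have := h0 w
      field_simp
      ring
    rw [← e]
    exact (hf w).hasDerivAt.mul (hg' w).neg.cexp
  have hc := is_const_of_deriv_eq_zero (fun w => (hder w).differentiableAt)
    (fun w => (hder w).deriv) z 0
  simp only [hg0, exp_neg, exp_log (h0 0)] at hc
  rw [mul_inv_cancel₀ (h0 0)] at hc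
  exact (mul_inv_eq_one₀ (exp_ne_zero _)).mp hc

lemma exists_entire_sqrt {f : ℂ → ℂ} (hf : Differentiable ℂ f) (h0 : ∀ z, f z ≠ 0) :
    ∃ u : ℂ → ℂ, Differentiable ℂ u ∧ ∀ z, f z = u z ^ 2 := by
  obtain ⟨g, hg, hfg⟩ := exists_entire_log hf h0
  refine ⟨fun z => exp (g z / 2), by fun_prop, fun z => ?_⟩
  rw [hfg z, ← exp_nat_mul]
  congr 1
  push_cast
  ring

lemma exists_real_cosh_sq_eq_natCast {x : ℝ} (hx : 0 ≤ x) :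
    ∃ t ∈ Icc x (x + 1), ∃ n : ℕ, Real.cosh t ^ 2 = n := by
  have h1 : 3 / 2 ≤ Real.cosh 1 := by
    have hexp := Real.exp_one_gt_d9
    rw [Real.cosh_eq]
    have := Real.exp_pos (-1)
    have h2 : Real.exp 1 * Real.exp (-1) = 1 := by rw [← Real.exp_add]; simp
    have := Real.exp_one_lt_d9
    nlinarith
  have hcx := Real.one_le_cosh x
  have hgrow : 3 / 2 * Real.cosh x ≤ Real.cosh (x + 1) := by
    rw [Real.cosh_add]
    have := mul_nonneg (Real.sinh_nonneg_iff.mpr hx) (Real.sinh_nonneg_iff.mpr zero_le_one)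
    nlinarith
  have hivt := intermediate_value_Icc (by linarith : x ≤ x + 1)
    (f := fun t => Real.cosh t ^ 2) (by have := Real.continuous_cosh; fun_prop)
  have hmem : (⌈Real.cosh x ^ 2⌉₊ : ℝ) ∈ Icc (Real.cosh x ^ 2) (Real.cosh (x + 1) ^ 2) := by
    refine ⟨Nat.le_ceil _, ?_⟩
    have := Nat.ceil_lt_add_one (sq_nonneg (Real.cosh x))
    nlinarith
  obtain ⟨t, ht, hn⟩ := hivt hmem
  exact ⟨t, ht, _, hn⟩

/-- The points where `cosh²` takes integer values form a net in the plane: on the real axis they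
have gaps of bounded length, and they are invariant under translation by `πi`. -/
lemma exists_cosh_sq_eq_natCast (c : ℂ) : ∃ w ∈ ball c 5, ∃ n : ℕ, cosh w ^ 2 = n := by
  obtain ⟨t, ht, n, hn⟩ : ∃ t : ℝ, |t - c.re| ≤ 1 ∧ ∃ n : ℕ, Real.cosh t ^ 2 = n := by
    rcases le_total 0 c.re with h | h
    · obtain ⟨t, ⟨h1, h2⟩, hn⟩ := exists_real_cosh_sq_eq_natCast h
      exact ⟨t, abs_le.mpr ⟨by linarith, by linarith⟩, hn⟩
    · obtain ⟨t, ⟨h1, h2⟩, hn⟩ := exists_real_cosh_sq_eq_natCast (neg_nonneg.mpr h)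
      exact ⟨-t, abs_le.mpr ⟨by linarith, by linarith⟩, by rwa [Real.cosh_neg]⟩
  have hpi := Real.pi_pos
  set m : ℤ := ⌊c.im / Real.pi⌋ with hm
  have hm1 : m * Real.pi ≤ c.im := by
    rw [← le_div_iff₀ hpi]
    exact Int.floor_le _
  have hm2 : c.im < (m + 1) * Real.pi := by
    rw [← div_lt_iff₀ hpi]
    exact Int.lt_floor_add_one _
  refine ⟨t + m * Real.pi * I, ?_, n, ?_⟩
  · rw [mem_ball, dist_eq_norm]
    refine (norm_le_abs_re_add_abs_im _).trans_lt ?_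
    have him : |m * Real.pi - c.im| ≤ Real.pi := abs_le.mpr ⟨by linarith, by linarith⟩
    have := Real.pi_lt_four
    simp only [sub_re, add_re, ofReal_re, mul_re, intCast_re, intCast_im, ofReal_im, I_re, I_im,
      sub_im, add_im, mul_im]
    ring_nf at him ht ⊢
    linarith
  · have hsinh : sinh (m * Real.pi * I) = 0 := by
      rw [sinh_mul_I, sin_int_mul_pi, zero_mul]
    have hcosh : cosh (m * Real.pi * I) ^ 2 = 1 := by
      rw [cosh_sq, hsinh]
      simp
    rw [cosh_add, hsinh, mul_zero, add_zero, mul_pow, hcosh, mul_one, ← ofReal_cosh]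
    exact_mod_cast hn

/-- Picard's little theorem, for the omitted values `0` and `1`. -/
theorem picard_zero_one {f : ℂ → ℂ} (hf : Differentiable ℂ f) (h0 : ∀ z, f z ≠ 0)
    (h1 : ∀ z, f z ≠ 1) (x y : ℂ) : f x = f y := by
  obtain ⟨L, hL, hfL⟩ := exists_entire_log hf h0
  set G : ℂ → ℂ := fun z => L z / (2 * Real.pi * I) with hG
  have hGd : Differentiable ℂ G := hL.div_const _
  have hfG : ∀ z, f z = exp (G z * (2 * Real.pi * I)) := by
    intro z
    rw [hfL, hG, div_mul_cancel₀ _ two_pi_I_ne_zero]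
  have hGn : ∀ z, ∀ n : ℕ, G z ≠ n := by
    intro z n hn
    apply h1 z
    rw [hfG, hn]
    exact exp_nat_mul_two_pi_mul_I n
  obtain ⟨u, hu, hGu⟩ := exists_entire_sqrt hGd (fun z => by simpa using hGn z 0)
  obtain ⟨v, hv, hGv⟩ := exists_entire_sqrt (hGd.sub_const 1)
    (fun z => sub_ne_zero.mpr (by simpa using hGn z 1))
  have huv : ∀ z, (u z - v z) * (u z + v z) = 1 := by
    intro z
    linear_combination hGv z - hGu z
  -- Since `u² - v² = 1`, the difference `u - v` is some `exp g`, and then `u = cosh g`.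
  obtain ⟨g, hg, huvg⟩ := exists_entire_log (hu.sub hv)
    (fun z => left_ne_zero_of_mul_eq_one (huv z))
  have hcosh : ∀ z, G z = cosh (g z) ^ 2 := by
    intro z
    have e1 : u z - v z = exp (g z) := huvg z
    have e2 : u z + v z = exp (-g z) := by
      rw [exp_neg, ← e1]
      exact eq_inv_of_mul_eq_one_right (huv z)
    rw [hGu, cosh, ← e1, ← e2]
    ring
  have hder : ∀ p, deriv g p = 0 := by
    intro p
    by_contra hp
    obtain ⟨c, hc⟩ := exists_ball_subset_range hg hp 5
    obtain ⟨w, hw, n, hn⟩ := exists_cosh_sq_eq_natCast c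
    obtain ⟨z, rfl⟩ := hc hw
    exact hGn z n ((hcosh z).trans hn)
  rw [hfG, hfG, hcosh, hcosh, is_const_of_deriv_eq_zero hg hder x y]

end HolomorphicMotion

/-- A holomorphic motion of a connected set with at least two points, parametrized
by the whole plane, is affine in the moving variable:
`H(λ, z) = f(λ) + g(λ)·z` with `f(λ₀) = 0`, `g(λ₀) = 1`, `g` nonvanishing. -/
theorem holomorphic_motion_over_plane_is_affine
    (E : Set ℂ) (hE : IsConnected E) (hE2 : E.Nontrivial)
    (lam0 : ℂ) (H : ℂ → ℂ → ℂ)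
    (hbase : ∀ z ∈ E, H lam0 z = z)
    (hinj : ∀ l : ℂ, Set.InjOn (H l) E)
    (hholo : ∀ z ∈ E, Differentiable ℂ (fun l => H l z)) :
    ∃ f g : ℂ → ℂ, Differentiable ℂ f ∧ Differentiable ℂ g ∧
      f lam0 = 0 ∧ g lam0 = 1 ∧ (∀ l : ℂ, g l ≠ 0) ∧
      ∀ l : ℂ, ∀ z ∈ E, H l z = f l + g l * z := by
  obtain ⟨a, ha, b, hb, hab⟩ := hE2
  have hba : b - a ≠ 0 := sub_ne_zero.mpr hab.symm
  have hHab : ∀ l, H l b - H l a ≠ 0 := fun l =>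
    sub_ne_zero.mpr fun h => hab.symm (hinj l hb ha h)
  have hHa := hholo a ha
  have hHb := hholo b hb
  refine ⟨fun l => H l a - (H l b - H l a) / (b - a) * a, fun l => (H l b - H l a) / (b - a),
    by fun_prop, by fun_prop, ?_, ?_, fun l => div_ne_zero (hHab l) hba, ?_⟩
  · simp [hbase a ha, hbase b hb, hba]
  · simp [hbase a ha, hbase b hb, hba]
  intro l z hz
  have key : (H l z - H l a) / (H l b - H l a) = (z - a) / (b - a) := by
    -- The quotient omits `0` and `1` only when `z` is neither `a` nor `b`.
    by_cases hza : z = a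
    · simp [hza]
    by_cases hzb : z = b
    · simp [hzb, hba, hHab l]
    have h := HolomorphicMotion.picard_zero_one
      (f := fun l => (H l z - H l a) / (H l b - H l a))
      (((hholo z hz).sub hHa).div (hHb.sub hHa) hHab)
      (fun l => div_ne_zero (sub_ne_zero.mpr fun h => hza (hinj l hz ha h)) (hHab l))
      (fun l h => hzb (hinj l hz hb (by
        rw [div_eq_one_iff_eq (hHab l)] at h
        exact sub_left_injective h)))
      l lam0
    simpa only [hbase z hz, hbase a ha, hbase b hb] using h
  rw [div_eq_div_iff (hHab l) hba] at key
  field_simp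
  linear_combination key
end

section
/- Let E ⊂ ℂ be connected, Λ* ⊂ ℂ a domain with isolated boundary point λ*, Λ = Λ* ∪ {λ*}, and let H : Λ × E → ℂ be a map which restricts to a holomorphic motion of E over Λ* with base point λ₀ ∈ Λ*, and such that λ ↦ H(λ, z) is holomorphic on Λ for each z ∈ E. If there exist distinct z₀, z₁ ∈ E with H(λ*, z₀) ≠ H(λ*, z₁), then the map z ↦ H(λ*, z) is injective on E, so H is a holomorphic motion of E over Λ. -/
/-!
The theorem rests on the qualitative part of the λ-lemma over an arbitrary planar domain, followed
by a Hurwitz argument at the puncture and the connectedness of `E`.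

*Continuity over `Λ*`.* For distinct `a, c, z ∈ E` the quotient
`(H(λ, c) - H(λ, a)) / (H(λ, z) - H(λ, a))` is holomorphic in `λ ∈ Λ*` and omits `0` and `1`.
Schottky's theorem (`schottky`), centred at a point `l` near `p`, shows that if this quotient is
bounded at `l` then it is bounded at `p`; hence continuity of `H(p, ·)` at `a` passes to nearby
parameters `l` (`eventually_norm_sub_le`). Starting from `H(λ₀, z) = z` and using that `Λ*` is
connected, `z ↦ H(·, z)` is continuous, uniformly on compact subsets of `Λ*`
(`tendstoUniformlyOn_motion`).

*Schottky's theorem.* A function omitting `0` and `1` on a disc is written through two nested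
cosines of a function `q`, with `q` controlled at the centre. The function `q` omits a set that
comes within distance `2` of every point, so a Bloch-type covering estimate
(`norm_deriv_le_of_omits_near`) bounds `q'`, hence `q`, hence the original function.

*Conclusion.* Take a circle in `Λ*` around `λ*`. By the maximum principle uniform convergence on
the circle gives continuity of `H(λ*, ·)` on `E`. If `a ≠ b` and `H(λ*, a) = H(λ*, b)`, then for `z`
near `b` the function `H(·, z) - H(·, a)` must, as in Hurwitz's theorem, vanish inside the circle,
and it can do so only at `λ*`. So the fibre `{z | H(λ*, z) = H(λ*, a)}` is a neighbourhood of
each of its points `≠ a`; exchanging the roles of `a` and `b`, also of `a`. A fibre with two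
points is thus relatively clopen in `E`, hence all of `E`, contradicting the separation of `z₀`
and `z₁`.
-/

open Set Metric

/-! ### Holomorphic logarithms and inverse cosines on discs -/

theorem exists_log_on_ball {c : ℂ} {R : ℝ} (hR : 0 < R) {f : ℂ → ℂ}
    (hf : DifferentiableOn ℂ f (ball c R)) (h0 : ∀ z ∈ ball c R, f z ≠ 0) :
    ∃ g : ℂ → ℂ, DifferentiableOn ℂ g (ball c R) ∧ ∀ z ∈ ball c R, Complex.exp (g z) = f z := by
  have hd : DifferentiableOn ℂ (fun z => deriv f z / f z) (ball c R) :=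
    (hf.deriv isOpen_ball).div hf h0
  obtain ⟨g, hgc, hg⟩ := hd.isExactOn_ball.with_val_at c (Complex.log (f c))
  have hgd : DifferentiableOn ℂ g (ball c R) :=
    fun z hz => (hg z hz).differentiableAt.differentiableWithinAt
  refine ⟨g, hgd, fun z hz => ?_⟩
  have hc : c ∈ ball c R := mem_ball_self hR
  have key : ∀ w ∈ ball c R, HasDerivAt (fun z => f z * Complex.exp (-g z)) 0 w := by
    intro w hw
    have h1 := (hf.differentiableAt (isOpen_ball.mem_nhds hw)).hasDerivAt
    have h2 := h1.mul (hg w hw).neg.cexp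
    have := h0 w hw
    refine h2.congr_deriv ?_
    field_simp
    ring
  have := (convex_ball c R).is_const_of_fderivWithin_eq_zero (𝕜 := ℂ)
    (f := fun z => f z * Complex.exp (-g z))
    (fun w hw => (key w hw).differentiableAt.differentiableWithinAt)
    (fun w hw => by
      rw [fderivWithin_of_isOpen isOpen_ball hw]
      ext; simp [(key w hw).deriv]) hz hc
  simp only [hgc, Complex.exp_neg, Complex.exp_log (h0 c hc)] at this
  have h3 := h0 c hc
  have h4 := Complex.exp_ne_zero (g z)
  field_simp at this
  exact this.symm

theorem abs_im_le_norm_cos (w : ℂ) : |w.im| ≤ ‖Complex.cos w‖ := by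
  have h1 : |w.im| ≤ |Real.sinh w.im| := by
    rw [Real.abs_sinh]; exact Real.self_le_sinh_iff.2 (abs_nonneg _)
  refine h1.trans ?_
  have h2 := abs_norm_sub_norm_le (Complex.exp (w * Complex.I)) (-Complex.exp (-w * Complex.I))
  rw [norm_neg, Complex.norm_exp, Complex.norm_exp] at h2
  have h3 : Complex.exp (w * Complex.I) - -Complex.exp (-w * Complex.I) = 2 * Complex.cos w := by
    rw [Complex.cos]; ring
  rw [h3, norm_mul] at h2
  simp only [Complex.mul_re, Complex.neg_re, Complex.neg_im, Complex.I_re, Complex.I_im] at h2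
  rw [Real.sinh_eq, abs_div, abs_sub_comm]
  simp at h2 ⊢
  linarith

theorem norm_cos_le_exp_norm (w : ℂ) : ‖Complex.cos w‖ ≤ Real.exp ‖w‖ := by
  have h1 := Complex.norm_exp_le_exp_norm (w * Complex.I)
  have h2 := Complex.norm_exp_le_exp_norm (-w * Complex.I)
  have h3 := norm_add_le (Complex.exp (w * Complex.I)) (Complex.exp (-w * Complex.I))
  rw [Complex.cos, norm_div]
  simp at h1 h2 h3 ⊢
  linarith

open Real in
/-- A holomorphic function omitting `±1` on a disc has the form `cos (π F)`. Shifting `F` by an even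
integer makes its value at the centre controlled by that of `f`. -/
theorem exists_arccos_on_ball {c : ℂ} {R : ℝ} (hR : 0 < R) {f : ℂ → ℂ}
    (hf : DifferentiableOn ℂ f (ball c R)) (h1 : ∀ z ∈ ball c R, f z ≠ 1)
    (h2 : ∀ z ∈ ball c R, f z ≠ -1) :
    ∃ F : ℂ → ℂ, DifferentiableOn ℂ F (ball c R) ∧
      (∀ z ∈ ball c R, f z = Complex.cos (π * F z)) ∧ ‖F c‖ ≤ 1 + ‖f c‖ := by
  obtain ⟨g, hg, hge⟩ := exists_log_on_ball hR (f := fun z => 1 - f z ^ 2) (by fun_prop) (by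
    intro z hz h
    have : (1 - f z) * (1 + f z) = 0 := by linear_combination h
    rcases mul_eq_zero.1 this with h | h
    · exact h1 z hz (by linear_combination -h)
    · exact h2 z hz (by linear_combination h))
  -- With `s ^ 2 = 1 - f ^ 2`, the function `f + i s = exp (i π F)` has inverse `f - i s`.
  have hinv : ∀ z ∈ ball c R, (f z + Complex.I * Complex.exp (g z / 2)) *
      (f z - Complex.I * Complex.exp (g z / 2)) = 1 := by
    intro z hz
    have h3 : Complex.exp (g z / 2) ^ 2 = 1 - f z ^ 2 := by
      rw [← hge z hz, ← Complex.exp_nat_mul]; congr 1; push_cast; ring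
    linear_combination h3 - Complex.exp (g z / 2) ^ 2 * Complex.I_sq
  obtain ⟨k, hk, hke⟩ := exists_log_on_ball hR
    (f := fun z => f z + Complex.I * Complex.exp (g z / 2)) (by fun_prop)
    (fun z hz => left_ne_zero_of_mul_eq_one (hinv z hz))
  have hpi : (π : ℂ) ≠ 0 := by exact_mod_cast Real.pi_ne_zero
  set n : ℤ := round ((k c / (π * Complex.I)).re / 2) with hn
  have hcos : ∀ z ∈ ball c R, f z = Complex.cos (π * (k z / (π * Complex.I) - 2 * n)) := by
    intro z hz
    have h3 : (π : ℂ) * (k z / (π * Complex.I) - 2 * n) = k z / Complex.I - n * (2 * π) := by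
      field_simp
    rw [h3, Complex.cos_sub_int_mul_two_pi, Complex.cos]
    have h4 : k z / Complex.I * Complex.I = k z := by field_simp
    have h5 : -(k z / Complex.I) * Complex.I = - k z := by field_simp
    have h6 : Complex.exp (-k z) = f z - Complex.I * Complex.exp (g z / 2) := by
      rw [Complex.exp_neg, hke z hz]
      exact inv_eq_of_mul_eq_one_right (hinv z hz)
    rw [h4, h5, h6, hke z hz]; ring
  refine ⟨fun z => k z / (π * Complex.I) - 2 * n, by fun_prop, hcos, ?_⟩
  have hc : c ∈ ball c R := mem_ball_self hR
  refine (Complex.norm_le_abs_re_add_abs_im _).trans (add_le_add ?_ ?_)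
  · have := abs_sub_round ((k c / (π * Complex.I)).re / 2)
    rw [← hn, abs_le] at this
    rw [Complex.sub_re, abs_le]
    simp only [Complex.mul_re, Complex.re_ofNat, Complex.intCast_re, Complex.im_ofNat,
      Complex.intCast_im]
    constructor <;> linarith [this.1, this.2]
  · have h3 := abs_im_le_norm_cos (π * (k c / (π * Complex.I) - 2 * n))
    rw [← hcos c hc, Complex.im_ofReal_mul, abs_mul, abs_of_pos pi_pos] at h3
    refine le_trans ?_ h3
    have := Real.pi_gt_three
    nlinarith [abs_nonneg (k c / (π * Complex.I) - 2 * n : ℂ).im]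

open Real in
/-- The set where `cos (π p)` is an integer comes within distance `2` of every point: it contains
the points `m + i t` with `m` an integer and `cosh (π t)` an integer. -/
theorem exists_cos_pi_eq_int_near (w : ℂ) :
    ∃ p : ℂ, ‖p - w‖ < 2 ∧ ∃ n : ℤ, Complex.cos (π * p) = n := by
  -- `cosh (π t)` grows by at least `1` over an interval of length `1`, so it hits an integer there.
  have main : ∀ y : ℝ, 0 ≤ y → ∃ t : ℝ, |t - y| ≤ 1 ∧ ∃ n : ℤ, Real.cosh (π * t) = n := by
    intro y hy
    have hpi := Real.pi_gt_three
    have hstep : Real.cosh (π * y) + 1 ≤ Real.cosh (π * (y + 1)) := by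
      rw [mul_add, mul_one, Real.cosh_add]
      have a1 := Real.one_le_cosh (π * y)
      have a2 : 0 ≤ Real.sinh (π * y) := Real.sinh_nonneg_iff.2 (by positivity)
      have a3 : π ≤ Real.sinh π := Real.self_le_sinh_iff.2 pi_pos.le
      have a4 := Real.sinh_lt_cosh π
      nlinarith
    have hc : ContinuousOn (fun t => Real.cosh (π * t)) (Icc y (y + 1)) := by fun_prop
    have := intermediate_value_Icc (by linarith) hc
    obtain ⟨t, ht, hte⟩ := this (show ((⌈Real.cosh (π * y)⌉ : ℤ) : ℝ) ∈ _ from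
      ⟨Int.le_ceil _, by linarith [Int.ceil_lt_add_one (Real.cosh (π * y))]⟩)
    exact ⟨t, by rw [abs_le]; constructor <;> linarith [ht.1, ht.2], _, hte⟩
  have main2 : ∀ y : ℝ, ∃ t : ℝ, |t - y| ≤ 1 ∧ ∃ n : ℤ, Real.cosh (π * t) = n := by
    intro y
    rcases le_total 0 y with hy | hy
    · exact main y hy
    · obtain ⟨t, ht, n, hn⟩ := main (-y) (by linarith)
      refine ⟨-t, ?_, n, ?_⟩
      · rw [← abs_neg]; convert ht using 2; ring
      · rw [mul_neg, Real.cosh_neg, hn]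
  obtain ⟨t, ht, n, hn⟩ := main2 w.im
  refine ⟨(round w.re : ℝ) + t * Complex.I, ?_, (-1) ^ (round w.re).natAbs * n, ?_⟩
  · refine (Complex.norm_le_abs_re_add_abs_im _).trans_lt ?_
    have := abs_sub_round w.re
    rw [abs_sub_comm] at this
    simp
    linarith
  · have h1 : (π : ℂ) * ((round w.re : ℝ) + t * Complex.I)
        = (round w.re : ℤ) * (π : ℂ) + ((π * t : ℝ) : ℂ) * Complex.I := by push_cast; ring
    rw [h1, Complex.cos_add_mul_I, ← Complex.ofReal_cosh, hn, Complex.sin_int_mul_pi]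
    have h2 : Complex.cos ((round w.re : ℤ) * (π : ℂ)) = (-1) ^ (round w.re).natAbs := by
      have := Real.cos_int_mul_pi (round w.re)
      have h3 : Complex.cos ((round w.re : ℤ) * (π : ℂ)) = ((Real.cos ((round w.re : ℤ) * π) : ℝ) : ℂ) := by
        push_cast; rfl
      rw [h3, this]
      rcases Int.even_or_odd (round w.re) with h | h
      · rw [h.neg_one_zpow, (Int.natAbs_even.2 h).neg_one_pow]; simp
      · rw [h.neg_one_zpow, (Int.natAbs_odd.2 h).neg_one_pow]; simp
    rw [h2]; push_cast; ring

/-! ### The theorems of Bloch and Schottky -/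

/-- A form of Bloch's theorem: if the image of a disc of radius `R` contains no disc of radius `2`,
the derivative at the centre is at most an absolute constant over `R`. -/
theorem norm_deriv_le_of_omits_near {c : ℂ} {R : ℝ} (hR : 0 < R) {q : ℂ → ℂ}
    (hq : DifferentiableOn ℂ q (ball c R))
    (hno : ∀ w, ∃ p, ‖p - w‖ < 2 ∧ p ∉ q '' ball c R) : ‖deriv q c‖ ≤ 192 / R := by
  have hq' : DifferentiableOn ℂ (deriv q) (ball c R) := hq.deriv isOpen_ball
  have hsub : closedBall c (R / 2) ⊆ ball c R := closedBall_subset_ball (by linarith)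
  -- Landau's choice of a point: on the disc of radius `t` about the maximum point `a`, the
  -- derivative is at most twice its modulus at `a`.
  obtain ⟨a, ha, hmax⟩ := (isCompact_closedBall c (R / 2)).exists_isMaxOn
    ⟨c, mem_closedBall_self (by linarith)⟩
    (f := fun z => ‖deriv q z‖ * (R / 2 - dist z c))
    ((hq'.continuousOn.mono hsub).norm.mul (by fun_prop))
  have hmax' : ∀ z ∈ closedBall c (R / 2),
      ‖deriv q z‖ * (R / 2 - dist z c) ≤ ‖deriv q a‖ * (R / 2 - dist a c) := fun z hz => hmax hz
  set D := ‖deriv q a‖ with hD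
  set t := (R / 2 - dist a c) / 2 with ht
  have hc := hmax' c (mem_closedBall_self (by linarith))
  rw [dist_self, sub_zero] at hc
  have hM : D * (R / 2 - dist a c) = 2 * (D * t) := by rw [ht]; ring
  rw [hM] at hc hmax'
  suffices h : D * t ≤ 48 by
    rw [le_div_iff₀ hR]; linarith
  by_contra! hlt
  have hD0 : 0 ≤ D := norm_nonneg _
  have ht0 : 0 < t := by
    by_contra! h
    nlinarith
  have hDpos : 0 < D := by
    by_contra! h
    nlinarith
  have hball : ball a t ⊆ closedBall c (R / 2) := by
    intro z hz
    rw [mem_ball] at hz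
    rw [mem_closedBall]
    linarith [dist_triangle z a c]
  have hder : ∀ z ∈ ball a t, ‖deriv q z‖ ≤ 2 * D := by
    intro z hz
    have h1 := hmax' z (hball hz)
    rw [mem_ball] at hz
    have h2 : t ≤ R / 2 - dist z c := by linarith [dist_triangle z a c]
    have h3 := (mul_le_mul_of_nonneg_left h2 (norm_nonneg (deriv q z))).trans h1
    refine le_of_mul_le_mul_right (a := t) ?_ ht0
    linarith
  have hschw : ∀ z ∈ ball a t, dist (deriv q z) (deriv q a) ≤ 3 * D / t * dist z a := by
    intro z hz
    refine Complex.dist_le_div_mul_dist_of_mapsTo_ball (hq'.mono (hball.trans hsub)) ?_ hz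
    intro w hw
    rw [mem_closedBall, dist_eq_norm]
    linarith [norm_sub_le (deriv q w) (deriv q a), hder w hw]
  have hsub2 : closedBall a (t / 6) ⊆ ball a t := closedBall_subset_ball (by linarith)
  have hat : a ∈ closedBall a (t / 6) := mem_closedBall_self (by linarith)
  -- On the disc of radius `t / 6`, `q'` stays within `D / 2` of `q' a`, so `q` is close to affine.
  have hlin : ∀ z ∈ closedBall a (t / 6), D / 2 * ‖z - a‖ ≤ ‖q z - q a‖ := by
    intro z hz
    have h1 := (convex_closedBall a (t / 6)).norm_image_sub_le_of_norm_hasDerivWithin_le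
      (f := fun z => q z - deriv q a * z) (f' := fun z => deriv q z - deriv q a) (C := D / 2)
      (fun w hw => by
        have h := (hq.differentiableAt (isOpen_ball.mem_nhds
          (hsub (hball (hsub2 hw))))).hasDerivAt.sub ((hasDerivAt_id w).const_mul (deriv q a))
        rw [mul_one] at h
        exact h.hasDerivWithinAt)
      (fun w hw => by
        have h := hschw w (hsub2 hw)
        rw [mem_closedBall] at hw
        rw [← dist_eq_norm]
        refine h.trans ((mul_le_mul_of_nonneg_left hw (by positivity)).trans (le_of_eq ?_))
        field_simp; norm_num) hat hz
    have h2 : deriv q a * (z - a) = (q z - q a) - (q z - deriv q a * z - (q a - deriv q a * a)) := by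
      ring
    have h3 := norm_sub_le (q z - q a) (q z - deriv q a * z - (q a - deriv q a * a))
    rw [← h2, norm_mul, ← hD] at h3
    linarith
  have himg : ball (q a) (D * t / 12 / 2) ⊆ q '' closedBall a (t / 6) := by
    refine DiffContOnCl.ball_subset_image_closedBall ?_ (by linarith) ?_ ?_
    · refine (hq.mono ?_).diffContOnCl
      rw [closure_ball _ (by linarith : t / 6 ≠ 0)]
      exact hsub2.trans (hball.trans hsub)
    · intro z hz
      have := hlin z (sphere_subset_closedBall hz)
      rw [mem_sphere_iff_norm.1 hz] at this
      linarith
    · refine Filter.Eventually.frequently (f := nhdsWithin a {a}ᶜ) ?_ |>.filter_mono nhdsWithin_le_nhds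
      filter_upwards [self_mem_nhdsWithin,
        mem_nhdsWithin_of_mem_nhds (closedBall_mem_nhds a (by linarith : 0 < t / 6))] with z hz hz2 he
      have := hlin z hz2
      rw [he, sub_self, norm_zero] at this
      have h4 : 0 < ‖z - a‖ := norm_pos_iff.2 (sub_ne_zero.2 hz)
      nlinarith
  obtain ⟨p, hp, hpn⟩ := hno (q a)
  refine hpn (image_mono (hsub2.trans (hball.trans hsub)) (himg ?_))
  rw [mem_ball, dist_eq_norm]
  linarith

open Real in
/-- **Schottky's theorem**: a holomorphic function omitting `0` and `1` on a disc is bounded on the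
concentric disc of half the radius, by a constant depending only on a bound at the centre. -/
theorem schottky (M : ℝ) : ∃ C > 0, ∀ (c : ℂ) (R : ℝ) (f : ℂ → ℂ), 0 < R →
    DifferentiableOn ℂ f (ball c R) → (∀ z ∈ ball c R, f z ≠ 0) → (∀ z ∈ ball c R, f z ≠ 1) →
    ‖f c‖ ≤ M → ∀ z ∈ ball c (R / 2), ‖f z‖ ≤ C := by
  refine ⟨1 + exp (π * exp (π * (2 * M + 195))), by positivity, ?_⟩
  intro c R f hR hf h0 h1 hM z hz
  have hc : c ∈ ball c R := mem_ball_self hR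
  obtain ⟨F, hF, hfF, hFc⟩ := exists_arccos_on_ball hR (f := fun z => 1 - 2 * f z) (by fun_prop)
    (fun z hz h => h0 z hz (by linear_combination -h / 2))
    (fun z hz h => h1 z hz (by linear_combination -h / 2))
  have hint : ∀ z ∈ ball c R, ∀ n : ℤ, F z ≠ n := by
    intro z hz n hn
    have h2 : Complex.sin (π * F z) = 0 := by
      rw [hn, mul_comm]; exact Complex.sin_int_mul_pi n
    have h3 := Complex.sin_sq_add_cos_sq (π * F z)
    rw [h2, ← hfF z hz] at h3
    have h4 : f z * (f z - 1) = 0 := by linear_combination h3 / 4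
    rcases mul_eq_zero.1 h4 with h | h
    · exact h0 z hz h
    · exact h1 z hz (by linear_combination h)
  obtain ⟨q, hq, hFq, hqc⟩ := exists_arccos_on_ball hR hF
    (fun z hz h => hint z hz 1 (by simpa using h)) (fun z hz h => hint z hz (-1) (by simpa using h))
  have homit : ∀ w, ∃ p, ‖p - w‖ < 2 ∧ p ∉ q '' ball c R := by
    intro w
    obtain ⟨p, hp, n, hn⟩ := exists_cos_pi_eq_int_near w
    refine ⟨p, hp, ?_⟩
    rintro ⟨z, hz, rfl⟩
    exact hint z hz n (by rw [hFq z hz, hn])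
  have hsub : ∀ w ∈ ball c (R / 2), ball w (R / 2) ⊆ ball c R := by
    intro w hw
    apply ball_subset_ball'
    rw [mem_ball] at hw
    linarith
  have hder : ∀ w ∈ ball c (R / 2), ‖deriv q w‖ ≤ 192 / (R / 2) := by
    intro w hw
    refine norm_deriv_le_of_omits_near (by linarith) (hq.mono (hsub w hw)) fun u => ?_
    obtain ⟨p, hp, hpn⟩ := homit u
    exact ⟨p, hp, fun h => hpn (image_mono (hsub w hw) h)⟩
  have hmv := (convex_ball c (R / 2)).norm_image_sub_le_of_norm_deriv_le
    (fun w hw => hq.differentiableAt (isOpen_ball.mem_nhds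
      (ball_subset_ball (by linarith) hw))) hder (mem_ball_self (by linarith)) hz
  have hzc : ‖z - c‖ ≤ R / 2 := by
    rw [← dist_eq_norm]; exact (mem_ball.1 hz).le
  have hz' : z ∈ ball c R := ball_subset_ball (by linarith) hz
  have hqz : ‖q z‖ ≤ 2 * M + 195 := by
    have h2 : 192 / (R / 2) * ‖z - c‖ ≤ 192 := by
      refine (mul_le_mul_of_nonneg_left hzc (by positivity)).trans (le_of_eq ?_)
      field_simp
    have h3 := norm_sub_le (1 : ℂ) (2 * f c)
    rw [norm_mul, norm_one, Complex.norm_ofNat] at h3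
    have h4 : ‖q z‖ ≤ ‖q z - q c‖ + ‖q c‖ := norm_le_norm_sub_add _ _
    linarith
  have hFz : ‖F z‖ ≤ exp (π * (2 * M + 195)) := by
    rw [hFq z hz']
    refine (norm_cos_le_exp_norm _).trans (exp_le_exp.2 ?_)
    rw [norm_mul, Complex.norm_real, norm_of_nonneg pi_pos.le]
    gcongr
  have hfz : ‖1 - 2 * f z‖ ≤ exp (π * exp (π * (2 * M + 195))) := by
    rw [hfF z hz']
    refine (norm_cos_le_exp_norm _).trans (exp_le_exp.2 ?_)
    rw [norm_mul, Complex.norm_real, norm_of_nonneg pi_pos.le]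
    gcongr
  have h5 := norm_sub_le (1 : ℂ) (1 - 2 * f z)
  rw [show (1 : ℂ) - (1 - 2 * f z) = 2 * f z by ring, norm_mul, norm_one, Complex.norm_ofNat] at h5
  linarith [norm_nonneg (f z)]

/-! ### Continuity of holomorphic motions -/

open Filter Topology

/-- The key step of the λ-lemma: continuity of the motion at `a` at the centre `p` of a disc of
parameters forces `G l z - G l a` to be uniformly small, relative to `G l c - G l a`, for all `l`
near `p`. -/
theorem eventually_norm_sub_le {E : Set ℂ} {G : ℂ → ℂ → ℂ} {p : ℂ} {R : ℝ} (hR : 0 < R)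
    (hinj : ∀ l ∈ ball p R, InjOn (G l) E)
    (hd : ∀ z ∈ E, DifferentiableOn ℂ (fun l => G l z) (ball p R))
    {a c : ℂ} (ha : a ∈ E) (hc : c ∈ E) (hac : a ≠ c)
    (hcont : ContinuousWithinAt (G p) E a) {ε : ℝ} (hε : 0 < ε) :
    ∀ᶠ z in 𝓝[E] a, ∀ l ∈ ball p (R / 4), ‖G l z - G l a‖ ≤ ε * ‖G l c - G l a‖ := by
  obtain ⟨C, hC, hS⟩ := schottky (1 / ε)
  have hp : p ∈ ball p R := mem_ball_self hR
  have hpos : 0 < ‖G p c - G p a‖ :=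
    norm_pos_iff.2 (sub_ne_zero.2 fun h => hac ((hinj p hp hc ha h).symm))
  have hev := Metric.continuousWithinAt_iff'.1 hcont (‖G p c - G p a‖ / C) (by positivity)
  have hne : ∀ᶠ z in 𝓝[E] a, z ≠ c := mem_nhdsWithin_of_mem_nhds (isOpen_ne.mem_nhds hac)
  filter_upwards [hev, hne, self_mem_nhdsWithin] with z hz hzc hzE l hl
  rcases eq_or_ne z a with rfl | hza
  · rw [sub_self, norm_zero]; positivity
  by_contra! hlt
  rw [mem_ball] at hl
  have hsub : ball l (R / 2) ⊆ ball p R := ball_subset_ball' (by linarith)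
  have hden : ∀ m ∈ ball l (R / 2), G m z - G m a ≠ 0 := fun m hm =>
    sub_ne_zero.2 fun h => hza (hinj m (hsub hm) hzE ha h)
  have hdz := (hd z hzE).mono hsub
  have hda := (hd a ha).mono hsub
  have hdc := (hd c hc).mono hsub
  -- If `G l z - G l a` were large at `l`, Schottky's theorem centred at `l` would keep it large at `p`.
  have key := hS l (R / 2) (fun m => (G m c - G m a) / (G m z - G m a)) (by linarith)
    ((hdc.sub hda).div (hdz.sub hda) hden)
    (fun m hm => div_ne_zero (sub_ne_zero.2 fun h => hac (hinj m (hsub hm) hc ha h).symm)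
      (hden m hm))
    (fun m hm h => by
      rw [div_eq_one_iff_eq (hden m hm)] at h
      exact hzc (hinj m (hsub hm) hc hzE (sub_left_injective h)).symm)
    (by
      have h1 := norm_pos_iff.2 (hden l (mem_ball_self (by linarith)))
      rw [norm_div, div_le_div_iff₀ h1 hε]
      linarith)
    p (by rw [mem_ball, dist_comm]; linarith)
  have h2 : p ∈ ball l (R / 2) := by rw [mem_ball, dist_comm]; linarith
  rw [norm_div, div_le_iff₀ (norm_pos_iff.2 (hden p h2))] at key
  rw [dist_eq_norm, lt_div_iff₀ hC] at hz
  linarith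

theorem continuousWithinAt_of_mem_ball {E : Set ℂ} {G : ℂ → ℂ → ℂ} {p : ℂ} {R : ℝ} (hR : 0 < R)
    (hinj : ∀ l ∈ ball p R, InjOn (G l) E)
    (hd : ∀ z ∈ E, DifferentiableOn ℂ (fun l => G l z) (ball p R))
    {a c : ℂ} (ha : a ∈ E) (hc : c ∈ E) (hac : a ≠ c)
    (hcont : ContinuousWithinAt (G p) E a) {l : ℂ} (hl : l ∈ ball p (R / 4)) :
    ContinuousWithinAt (G l) E a := by
  rw [Metric.continuousWithinAt_iff']
  intro ε hε
  filter_upwards [eventually_norm_sub_le hR hinj hd ha hc hac hcont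
    (ε := ε / (‖G l c - G l a‖ + 1)) (by positivity)] with z hz
  rw [dist_eq_norm]
  refine (hz l hl).trans_lt ?_
  rw [div_mul_eq_mul_div, div_lt_iff₀ (by positivity)]
  linarith

/-- Continuity in `z` holds at the base point, where the motion is the identity, and propagates
along overlapping discs to the whole parameter domain. -/
theorem continuousWithinAt_motion {E Λ : Set ℂ} {G : ℂ → ℂ → ℂ} (hΛ : IsOpen Λ)
    (hΛc : IsPreconnected Λ) {lam0 : ℂ} (hlam0 : lam0 ∈ Λ) (hbase : ∀ z ∈ E, G lam0 z = z)
    (hinj : ∀ l ∈ Λ, InjOn (G l) E)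
    (hd : ∀ z ∈ E, DifferentiableOn ℂ (fun l => G l z) Λ)
    {a c : ℂ} (ha : a ∈ E) (hc : c ∈ E) (hac : a ≠ c) {l : ℂ} (hl : l ∈ Λ) :
    ContinuousWithinAt (G l) E a := by
  have h0 : ContinuousWithinAt (G lam0) E a :=
    continuousWithinAt_id.congr hbase (hbase a ha)
  refine hΛc.induction₂' (fun x y => ContinuousWithinAt (G x) E a → ContinuousWithinAt (G y) E a)
    ?_ (fun x y z _ _ _ h1 h2 h => h2 (h1 h)) hlam0 hl h0
  intro x hx
  obtain ⟨R, hR, hsub⟩ := Metric.isOpen_iff.1 hΛ x hx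
  filter_upwards [mem_nhdsWithin_of_mem_nhds (ball_mem_nhds x (by linarith : 0 < R / 8))] with y hy
  rw [mem_ball] at hy
  have hsub2 : ball y (R / 2) ⊆ Λ := (ball_subset_ball' (by linarith)).trans hsub
  exact ⟨fun h => continuousWithinAt_of_mem_ball hR (fun l hl => hinj l (hsub hl))
      (fun z hz => (hd z hz).mono hsub) ha hc hac h (by rw [mem_ball]; linarith),
    fun h => continuousWithinAt_of_mem_ball (p := y) (half_pos hR) (fun l hl => hinj l (hsub2 hl))
      (fun z hz => (hd z hz).mono hsub2) ha hc hac h (by rw [mem_ball, dist_comm]; linarith)⟩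

/-- The continuity in `z` is uniform over compact sets of parameters. -/
theorem tendstoUniformlyOn_motion {E Λ : Set ℂ} {G : ℂ → ℂ → ℂ} (hΛ : IsOpen Λ)
    (hΛc : IsPreconnected Λ) {lam0 : ℂ} (hlam0 : lam0 ∈ Λ) (hbase : ∀ z ∈ E, G lam0 z = z)
    (hinj : ∀ l ∈ Λ, InjOn (G l) E)
    (hd : ∀ z ∈ E, DifferentiableOn ℂ (fun l => G l z) Λ)
    {a c : ℂ} (ha : a ∈ E) (hc : c ∈ E) (hac : a ≠ c) {K : Set ℂ} (hK : IsCompact K)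
    (hKΛ : K ⊆ Λ) :
    TendstoUniformlyOn (fun z l => G l z) (fun l => G l a) (𝓝[E] a) K := by
  rw [← tendstoLocallyUniformlyOn_iff_tendstoUniformlyOn_of_compact hK,
    Metric.tendstoLocallyUniformlyOn_iff]
  intro ε hε x hx
  obtain ⟨R, hR, hsub⟩ := Metric.isOpen_iff.1 hΛ x (hKΛ hx)
  set B := ‖G x c - G x a‖ + 1 with hB
  have hBpos : 0 < B := by positivity
  -- The bound relative to `G l c - G l a` becomes absolute near `x`, where that factor is at most `B`.
  have hcts : ContinuousAt (fun l => ‖G l c - G l a‖) x :=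
    (((hd c hc).differentiableAt (hΛ.mem_nhds (hKΛ hx))).continuousAt.sub
      ((hd a ha).differentiableAt (hΛ.mem_nhds (hKΛ hx))).continuousAt).norm
  have hbd : ∀ᶠ l in 𝓝 x, ‖G l c - G l a‖ < B := hcts.eventually_lt_const (by simp [hB])
  refine ⟨_, mem_nhdsWithin_of_mem_nhds
    (inter_mem hbd (ball_mem_nhds x (by linarith : 0 < R / 4))), ?_⟩
  have hcx := continuousWithinAt_motion hΛ hΛc hlam0 hbase hinj hd ha hc hac (hKΛ hx)
  filter_upwards [eventually_norm_sub_le hR (fun l hl => hinj l (hsub hl))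
    (fun z hz => (hd z hz).mono hsub) ha hc hac hcx (ε := ε / B) (by positivity)] with z hz l hl
  rw [dist_comm, dist_eq_norm]
  refine (hz l hl.2).trans_lt ?_
  rw [div_mul_eq_mul_div, div_lt_iff₀ hBpos]
  exact mul_lt_mul_of_pos_left hl.1 hε

/-! ### The Hurwitz argument at the puncture -/

/-- If a holomorphically extended holomorphic motion separates two points at the
isolated boundary point `λ*`, then the time-`λ*` map is injective, so the
extension is a holomorphic motion over `Λ = Λ* ∪ {λ*}`. -/
theorem extended_motion_injective_at_puncture
    (E Λstar : Set ℂ) (lamStar lam0 : ℂ)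
    (hE : IsConnected E)
    (hΛopen : IsOpen Λstar) (hΛconn : IsConnected Λstar)
    (hnotin : lamStar ∉ Λstar)
    (hiso : ∃ r > 0, Metric.ball lamStar r \ {lamStar} ⊆ Λstar)
    (hlam0 : lam0 ∈ Λstar)
    (H : ℂ → ℂ → ℂ)
    (hbase : ∀ z ∈ E, H lam0 z = z)
    (hinj : ∀ l ∈ Λstar, Set.InjOn (H l) E)
    (hholo : ∀ z ∈ E, DifferentiableOn ℂ (fun l => H l z) (Λstar ∪ {lamStar}))
    (z0 z1 : ℂ) (hz0 : z0 ∈ E) (hz1 : z1 ∈ E) (hz01 : z0 ≠ z1)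
    (hsep : H lamStar z0 ≠ H lamStar z1) :
    Set.InjOn (H lamStar) E := by
  obtain ⟨r, hr, hrsub⟩ := hiso
  set ρ := r / 2 with hρ
  have hρ0 : 0 < ρ := by positivity
  have hcl : closedBall lamStar ρ ⊆ Λstar ∪ {lamStar} := by
    intro l hl
    rcases eq_or_ne l lamStar with h | h
    · exact Or.inr h
    · exact Or.inl (hrsub ⟨closedBall_subset_ball (by linarith) hl, h⟩)
  have hsph : sphere lamStar ρ ⊆ Λstar := fun l hl =>
    (hcl (sphere_subset_closedBall hl)).resolve_right (ne_of_mem_sphere hl hρ0.ne')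
  have hdcl : ∀ z ∈ E, DiffContOnCl ℂ (fun l => H l z) (ball lamStar ρ) := fun z hz =>
    ((hholo z hz).mono (by rwa [closure_ball _ hρ0.ne'])).diffContOnCl
  have hcen : lamStar ∈ closure (ball lamStar ρ) := subset_closure (mem_ball_self hρ0)
  have hunif : ∀ b ∈ E, TendstoUniformlyOn (fun z l => H l z) (fun l => H l b) (𝓝[E] b)
      (sphere lamStar ρ) := by
    intro b hb
    obtain ⟨c, hc, hbc⟩ : ∃ c ∈ E, b ≠ c := by
      by_cases h : b = z0
      · exact ⟨z1, hz1, h ▸ hz01⟩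
      · exact ⟨z0, hz0, h⟩
    exact tendstoUniformlyOn_motion hΛopen hΛconn.isPreconnected hlam0 hbase hinj
      (fun z hz => (hholo z hz).mono subset_union_left) hb hc hbc (isCompact_sphere _ _) hsph
  have hcont : ∀ b ∈ E, ContinuousWithinAt (H lamStar) E b := by
    intro b hb
    rw [Metric.continuousWithinAt_iff']
    intro ε hε
    filter_upwards [Metric.tendstoUniformlyOn_iff.1 (hunif b hb) (ε / 2) (by positivity),
      self_mem_nhdsWithin] with z hz hzE
    rw [dist_eq_norm]
    refine lt_of_le_of_lt (Complex.norm_le_of_forall_mem_frontier_norm_le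
      (f := fun l => H l z - H l b) isBounded_ball ((hdcl z hzE).sub (hdcl b hb)) (C := ε / 2)
      (fun l hl => ?_) hcen) (by linarith)
    rw [frontier_ball _ hρ0.ne'] at hl
    have := hz l hl
    rw [dist_comm, dist_eq_norm] at this
    exact this.le
  have hopen : ∀ a ∈ E, ∀ b ∈ E, a ≠ b → H lamStar b = H lamStar a →
      ∀ᶠ z in 𝓝[E] b, H lamStar z = H lamStar a := by
    intro a ha b hb hab hHab
    have hcts : ContinuousOn (fun l => ‖H l b - H l a‖) (sphere lamStar ρ) :=
      ((((hholo b hb).sub (hholo a ha)).continuousOn).mono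
        (sphere_subset_closedBall.trans hcl)).norm
    obtain ⟨l0, hl0, hmin⟩ := (isCompact_sphere lamStar ρ).exists_isMinOn
      (NormedSpace.sphere_nonempty.2 hρ0.le) hcts
    set m := ‖H l0 b - H l0 a‖ with hm
    have hm0 : 0 < m :=
      norm_pos_iff.2 (sub_ne_zero.2 fun h => hab (hinj l0 (hsph hl0) hb ha h).symm)
    have hne : ∀ᶠ z in 𝓝[E] b, z ≠ a := mem_nhdsWithin_of_mem_nhds (isOpen_ne.mem_nhds hab.symm)
    filter_upwards [Metric.tendstoUniformlyOn_iff.1 (hunif b hb) (m / 2) (by positivity),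
      Metric.continuousWithinAt_iff'.1 (hcont b hb) (m / 2) (by positivity),
      self_mem_nhdsWithin, hne] with z hz hzc hzE hza
    by_contra hHz
    have hnz : ∀ l ∈ closure (ball lamStar ρ), H l z - H l a ≠ 0 := by
      intro l hl
      rw [closure_ball _ hρ0.ne'] at hl
      rw [sub_ne_zero]
      rcases hcl hl with h | h
      · exact fun h' => hza (hinj l h hzE ha h')
      · rw [mem_singleton_iff.1 h]; exact hHz
    -- The minimum principle for the zero-free `H(·, z) - H(·, a)`: it is at least `m / 2` on the
    -- circle, yet smaller than that at `lamStar`.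
    have hmax := Complex.norm_le_of_forall_mem_frontier_norm_le
      (f := (fun l => H l z - H l a)⁻¹) isBounded_ball
      (((hdcl z hzE).sub (hdcl a ha)).inv hnz) (C := (m / 2)⁻¹) (fun l hl => by
        rw [frontier_ball _ hρ0.ne'] at hl
        rw [Pi.inv_apply, norm_inv]
        refine inv_anti₀ (by positivity) ?_
        have h1 := hz l hl
        have h2 : m ≤ ‖H l b - H l a‖ := hmin hl
        have h3 := norm_sub_le_norm_sub_add_norm_sub (H l b) (H l z) (H l a)
        rw [dist_eq_norm] at h1
        linarith) hcen
    rw [Pi.inv_apply, norm_inv, inv_le_inv₀ (norm_pos_iff.2 (hnz _ hcen)) (by positivity),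
      ← hHab, ← dist_eq_norm] at hmax
    linarith
  intro a ha b hb hHab
  by_contra hab
  have hloc : ∀ x ∈ E, ∀ᶠ y in 𝓝[E] x, (H lamStar x = H lamStar a ↔ H lamStar y = H lamStar a) := by
    intro x hx
    by_cases hxa : H lamStar x = H lamStar a
    · simp only [hxa, true_iff]
      by_cases hxe : x = a
      · -- At `a` itself the other point `b` of the fibre serves as reference point.
        subst hxe
        simpa only [hHab] using hopen b hb x ha (Ne.symm hab) hHab
      · exact hopen a ha x hx (Ne.symm hxe) hxa
    · filter_upwards [(hcont x hx).eventually_ne hxa] with y hy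
      simp [hxa, hy]
  have hall : ∀ y ∈ E, H lamStar y = H lamStar a := fun y hy =>
    hE.isPreconnected.induction₂' (fun x y => H lamStar x = H lamStar a → H lamStar y = H lamStar a)
      (fun x hx => (hloc x hx).mono fun y hy => ⟨hy.1, hy.2⟩)
      (fun x y z _ _ _ h1 h2 h => h2 (h1 h)) ha hy rfl
  exact hsep ((hall z0 hz0).trans (hall z1 hz1).symm)
end
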